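/- Let A be a symmetric real k×k matrix, T a symmetric positive definite real m×m matrix, and S a real k×m matrix. If A − 64 S T⁻¹ Sᵀ is positive semidefinite, then the symmetric (2k+2m)×(2k+2m) block matrix G with block rows [ (1/8)A, −(1/8)A, S, −S ], [ −(1/8)A, (1/8)A, −S, S ], [ Sᵀ, −Sᵀ, (1/8)T, −(1/8)T ], [ −Sᵀ, Sᵀ, −(1/8)T, (1/8)T ] is positive semidefinite. -/

import Mathlib

open Matrix

/-- Duplicating each block row and column of a positive semidefinite `2 × 2` block matrix with
opposite sign yields a positive semidefinite matrix. -/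
theorem Matrix.PosSemidef.fromBlocks_jump {m n : Type*} [Fintype m] [Fintype n]
    [DecidableEq m] [DecidableEq n] {A : Matrix m m ℝ} {B : Matrix m n ℝ} {C : Matrix n m ℝ}
    {D : Matrix n n ℝ} (h : (fromBlocks A B C D).PosSemidef) :
    (fromBlocks (fromBlocks A (-A) (-A) A) (fromBlocks B (-B) (-B) B)
      (fromBlocks C (-C) (-C) C) (fromBlocks D (-D) (-D) D)).PosSemidef := by
  have key := h.conjTranspose_mul_mul_same
    (fromBlocks (fromCols 1 (-1)) 0 0 (fromCols 1 (-1)) : Matrix (m ⊕ n) ((m ⊕ m) ⊕ (n ⊕ n)) ℝ)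
  simpa [fromBlocks_transpose, fromBlocks_multiply, transpose_fromCols,
    fromRows_mul, mul_fromCols, fromRows_fromCols_eq_fromBlocks] using key

/-- Generic facet block of the energy-stability analysis of extended-stencil
SATs: if `A − 64 S T⁻¹ Sᵀ ⪰ 0` (with `A` symmetric and `T` SPD), then the 4×4
block matrix `G` built from `A/8`, `S`, and `T/8` is positive semidefinite. -/
theorem extended_sat_facet_block_posSemidef {k m : ℕ}
    (A : Matrix (Fin k) (Fin k) ℝ) (T : Matrix (Fin m) (Fin m) ℝ)
    (S : Matrix (Fin k) (Fin m) ℝ)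
    (hA : A = Aᵀ) (hT : T.PosDef)
    (h : (A - (64 : ℝ) • (S * T⁻¹ * Sᵀ)).PosSemidef) :
    (Matrix.fromBlocks
      (Matrix.fromBlocks ((1/8 : ℝ) • A) (-((1/8 : ℝ) • A))
        (-((1/8 : ℝ) • A)) ((1/8 : ℝ) • A))
      (Matrix.fromBlocks S (-S) (-S) S)
      (Matrix.fromBlocks Sᵀ (-Sᵀ) (-Sᵀ) Sᵀ)
      (Matrix.fromBlocks ((1/8 : ℝ) • T) (-((1/8 : ℝ) • T))
        (-((1/8 : ℝ) • T)) ((1/8 : ℝ) • T))).PosSemidef := by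
  have hD : ((1/8 : ℝ) • T).PosDef := hT.smul (by norm_num)
  have : Invertible ((1/8 : ℝ) • T) := hD.isUnit.invertible
  have hinv : ((1/8 : ℝ) • T)⁻¹ = (8 : ℝ) • T⁻¹ := by
    refine inv_eq_right_inv ?_
    rw [smul_mul_smul_comm, mul_nonsing_inv _ ((isUnit_iff_isUnit_det _).mp hT.isUnit)]
    norm_num
  have hM : (fromBlocks ((1/8 : ℝ) • A) S Sᴴ ((1/8 : ℝ) • T)).PosSemidef := by
    rw [PosDef.fromBlocks₂₂ _ _ hD, hinv, conjTranspose_eq_transpose_of_trivial]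
    have hS : (1/8 : ℝ) • A - S * ((8 : ℝ) • T⁻¹) * Sᵀ =
        (1/8 : ℝ) • (A - (64 : ℝ) • (S * T⁻¹ * Sᵀ)) := by
      rw [smul_sub, smul_smul, Matrix.mul_smul, Matrix.smul_mul]
      norm_num
    rw [hS]
    exact h.smul (by norm_num)
  rw [conjTranspose_eq_transpose_of_trivial] at hM
  exact hM.fromBlocks_jump
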